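/- arXiv:2605.20974 — 2 statements merged into one kernel-verified Lean document; each statement's English description precedes it below -/
import Mathlib

section
/- Let G be a commutative group, N ≤ G a submonoid, b ∈ N, ℓ ∈ ℕ, and Ω ⊆ Z_{N,ℓ}(b). Then the set 𝒮_Ω(N,G) of Ω-admissible submonoids S with N ≤ S ≤ G, partially ordered by S₁ ≼ S₂ iff S₁ ≤ S₂ and every element of S₁ that is a unit of ↥S₂ is a unit of ↥S₁, has a maximal element: there exists an Ω-admissible S such that every Ω-admissible T with S ≼ T equals S. -/
/-- The set of factorizations of `b` in the submonoid `S` of the group `G`. -/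
def ZSet {G : Type*} [CommGroup G] (S : Submonoid G) (b : S) :
    Set (Multiset (Associates S)) :=
  {z | (∀ a ∈ z, Irreducible a) ∧ z.prod = Associates.mk b}

/-- The set of length-`ℓ` factorizations of `b` in `S`. -/
def ZSetLen {G : Type*} [CommGroup G] (S : Submonoid G) (b : S) (ℓ : ℕ) :
    Set (Multiset (Associates S)) :=
  {z ∈ ZSet S b | Multiset.card z = ℓ}

/-- `u` is a unit of the submonoid `S` of the group `G`: `u⁻¹ ∈ S`. -/
def IsUnitIn {G : Type*} [CommGroup G] (S : Submonoid G) (u : G) : Prop :=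
  u⁻¹ ∈ S

/-- `S` is unit-reflecting over `N`. -/
def UnitReflecting {G : Type*} [CommGroup G] (N S : Submonoid G) : Prop :=
  ∀ u ∈ S, IsUnitIn S u → ∀ x ∈ N, ∀ y ∈ N, u * y = x → u ∈ N ∧ IsUnitIn N u

/-- `S` is `Ω`-admissible over `N`: `N ≤ S`, `S` is unit-reflecting over `N`, and
every `a ∈ N` whose class in `Associates ↥N` occurs in some `z ∈ Ω` has irreducible
class in `Associates ↥S`. -/
def OmegaAdmissible {G : Type*} [CommGroup G] (N S : Submonoid G)
    (Ω : Set (Multiset (Associates N))) : Prop :=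
  N ≤ S ∧ UnitReflecting N S ∧
    ∀ (a : G) (haN : a ∈ N) (haS : a ∈ S),
      (∃ z ∈ Ω, Associates.mk (⟨a, haN⟩ : N) ∈ z) →
        Irreducible (Associates.mk (⟨a, haS⟩ : S))

/-- The survival order: `S₁ ≼ S₂` iff `S₁ ≤ S₂` and every element of `S₁` that is a
unit of `↥S₂` is a unit of `↥S₁`. -/
def Prec {G : Type*} [CommGroup G] (S₁ S₂ : Submonoid G) : Prop :=
  S₁ ≤ S₂ ∧ ∀ u ∈ S₁, IsUnitIn S₂ u → IsUnitIn S₁ u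

theorem irr_iff_aux {G : Type*} [CommGroup G] (S : Submonoid G) (a : G) (ha : a ∈ S) :
    Irreducible (Associates.mk (⟨a, ha⟩ : S)) ↔
      a⁻¹ ∉ S ∧ ∀ x ∈ S, ∀ y ∈ S, a = x * y → x⁻¹ ∈ S ∨ y⁻¹ ∈ S := by
  have hu : ∀ x : S, IsUnit x ↔ (x : G)⁻¹ ∈ S := by
    intro x
    constructor
    · intro h
      obtain ⟨y, hy⟩ := h.exists_right_inv
      have h2 : (x : G) * y = 1 := congrArg Subtype.val hy
      rw [inv_eq_of_mul_eq_one_right h2]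
      exact y.2
    · intro h
      exact IsUnit.of_mul_eq_one (⟨_, h⟩ : S) (Subtype.ext (mul_inv_cancel _))
  rw [irreducible_iff, Associates.isUnit_mk, hu]
  refine and_congr Iff.rfl ⟨?_, ?_⟩
  · intro h x hx y hy e
    have := @h (Associates.mk ⟨x, hx⟩) (Associates.mk ⟨y, hy⟩)
      (by rw [Associates.mk_mul_mk]; exact congrArg _ (Subtype.ext e))
    rwa [Associates.isUnit_mk, Associates.isUnit_mk, hu, hu] at this
  · intro h x y
    obtain ⟨x, rfl⟩ := Associates.mk_surjective x
    obtain ⟨y, rfl⟩ := Associates.mk_surjective y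
    intro e
    rw [Associates.mk_mul_mk, Associates.mk_eq_mk_iff_associated] at e
    obtain ⟨u, e⟩ := e.symm
    rw [Associates.isUnit_mk, Associates.isUnit_mk, ← Units.isUnit_mul_units y u, hu, hu]
    refine h x x.2 _ (y * (u : S)).2 ?_
    have h3 : x * (y * (u : S)) = ⟨a, ha⟩ := by rw [← mul_assoc, e]
    exact (congrArg Subtype.val h3).symm

/-- Maximal survival: the poset of `Ω`-admissible submonoids between `N` and `G`
under the order `≼` has a maximal element. -/
theorem maximal_survival {G : Type*} [CommGroup G] (N : Submonoid G) (b : G)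
    (hb : b ∈ N) (ℓ : ℕ) (Ω : Set (Multiset (Associates N)))
    (hΩ : Ω ⊆ ZSetLen N ⟨b, hb⟩ ℓ) :
    ∃ S : Submonoid G, OmegaAdmissible N S Ω ∧
      ∀ T : Submonoid G, OmegaAdmissible N T Ω → Prec S T → T = S := by
  have hN : OmegaAdmissible N N Ω := by
    refine ⟨le_rfl, fun u hu hu' _ _ _ _ _ => ⟨hu, hu'⟩, ?_⟩
    rintro a haN haS ⟨z, hz, haz⟩
    exact (hΩ hz).1.1 _ haz
  obtain ⟨S, -, hS⟩ := zorn_le_nonempty₀ {S : Submonoid G | OmegaAdmissible N S Ω} (by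
    intro c hc hchain y hy
    have hmem : ∀ x, x ∈ sSup c ↔ ∃ s ∈ c, x ∈ s := fun x =>
      Submonoid.mem_sSup_of_directedOn ⟨y, hy⟩ hchain.directedOn
    have h2 : ∀ x ∈ sSup c, ∀ w ∈ sSup c, ∃ s ∈ c, x ∈ s ∧ w ∈ s := by
      intro x hx w hw
      obtain ⟨s, hs, hxs⟩ := (hmem x).1 hx
      obtain ⟨t, ht, hwt⟩ := (hmem w).1 hw
      obtain ⟨r, hr, hsr, htr⟩ := hchain.directedOn s hs t ht
      exact ⟨r, hr, hsr hxs, htr hwt⟩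
    refine ⟨sSup c, ⟨(hc hy).1.trans (le_sSup hy), ?_, ?_⟩, fun z hz => le_sSup hz⟩
    · intro u hu hu' x hx w hw e
      obtain ⟨s, hs, h1, h3⟩ := h2 u hu _ hu'
      exact (hc hs).2.1 u h1 h3 x hx w hw e
    · intro a haN haS hz
      have key : ∀ s ∈ c, _ := fun s hs =>
        (irr_iff_aux s a ((hc hs).1 haN)).1 ((hc hs).2.2 a haN ((hc hs).1 haN) hz)
      rw [irr_iff_aux]
      constructor
      · intro h
        obtain ⟨s, hs, h⟩ := (hmem _).1 h
        exact (key s hs).1 h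
      · intro x hx w hw e
        obtain ⟨s, hs, h1, h3⟩ := h2 x hx w hw
        exact ((key s hs).2 x h1 w h3 e).imp (fun h => (hmem _).2 ⟨s, hs, h⟩)
          (fun h => (hmem _).2 ⟨s, hs, h⟩)) N hN
  exact ⟨S, hS.prop, fun T hT hST => le_antisymm (hS.le_of_ge hT hST.1) hST.1⟩
end

section
/- Let G be a commutative group, let N ≤ S ≤ G be submonoids, b ∈ N, ℓ ∈ ℕ, and Ω ⊆ Z_{N,ℓ}(b). Suppose S is Ω-admissible over N and b⁻¹ ∉ S. Let u ∈ G satisfy condition (i) or condition (ii), and set S' = S ⊔ Submonoid.powers (b^2 * u). Then S' is Ω-admissible over N. -/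
theorem isUnit_sub_iff {G : Type*} [CommGroup G] (S : Submonoid G) (x : G) (hx : x ∈ S) :
    IsUnit (⟨x, hx⟩ : S) ↔ x⁻¹ ∈ S := by
  constructor
  · intro h
    obtain ⟨y, hy⟩ := h.exists_right_inv
    have h2 : x * (y : G) = 1 := congrArg Subtype.val hy
    rw [inv_eq_of_mul_eq_one_right h2]
    exact y.2
  · intro h
    exact IsUnit.of_mul_eq_one ⟨x⁻¹, h⟩ (Subtype.ext (mul_inv_cancel x))

theorem irr_sub_iff {G : Type*} [CommGroup G] (S : Submonoid G) (x : G) (hx : x ∈ S) :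
    Irreducible (Associates.mk (⟨x, hx⟩ : S)) ↔
      x⁻¹ ∉ S ∧ ∀ y ∈ S, ∀ z ∈ S, x = y * z → y⁻¹ ∈ S ∨ z⁻¹ ∈ S := by
  rw [irreducible_iff, Associates.isUnit_mk, isUnit_sub_iff]
  refine and_congr_right fun _ => ⟨?_, ?_⟩
  · intro h y hy z hz e
    have := @h (Associates.mk ⟨y, hy⟩) (Associates.mk ⟨z, hz⟩) (by
      rw [Associates.mk_mul_mk]; exact congrArg _ (Subtype.ext e))
    rwa [Associates.isUnit_mk, Associates.isUnit_mk, isUnit_sub_iff, isUnit_sub_iff] at this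
  · intro h y' z' e
    obtain ⟨⟨y, hy⟩, rfl⟩ := Associates.mk_surjective y'
    obtain ⟨⟨z, hz⟩, rfl⟩ := Associates.mk_surjective z'
    rw [Associates.mk_mul_mk, eq_comm, Associates.mk_eq_mk_iff_associated] at e
    obtain ⟨w, hw⟩ := e
    have hw' : y * z * ((w : S) : G) = x := congrArg Subtype.val hw
    rw [Associates.isUnit_mk, Associates.isUnit_mk, isUnit_sub_iff, isUnit_sub_iff]
    refine (h y hy (z * ((w : S) : G)) (S.mul_mem hz (w : S).2)
      (by rw [← hw', mul_assoc])).imp id fun h2 => ?_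
    have h3 := S.mul_mem (w : S).2 h2
    rwa [mul_inv_rev, mul_inv_cancel_left] at h3

/-- Atoms used by `Ω` do not split: if `S` is `Ω`-admissible over `N`, `b` is not a
unit of `↥S`, and `u` satisfies condition (i) or condition (ii), then
`S' = S ⊔ powers (b^2 * u)` is again `Ω`-admissible over `N`. -/
theorem atoms_do_not_split {G : Type*} [CommGroup G] (N S : Submonoid G)
    (b : G) (hb : b ∈ N) (ℓ : ℕ) (Ω : Set (Multiset (Associates N)))
    (hΩ : Ω ⊆ ZSetLen N ⟨b, hb⟩ ℓ)
    (hadm : OmegaAdmissible N S Ω) (hbu : b⁻¹ ∉ S) (u : G)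
    (hcond : (∃ n₀ : ℕ, 1 ≤ n₀ ∧ u ^ n₀ ∈ S) ∨
      (∀ n : ℕ, 1 ≤ n → ∀ q ∈ S, u ^ n * q ≠ 1)) :
    OmegaAdmissible N (S ⊔ Submonoid.powers (b ^ 2 * u)) Ω := by
  obtain ⟨hNS, hur, hirr⟩ := hadm
  have hbS : b ∈ S := hNS hb
  have key : ∀ k j : ℕ, 1 ≤ k → 1 ≤ j → ∀ q ∈ S, u ^ k * (q * b ^ j) ≠ 1 := by
    intro k j hk hj q hq e
    rcases hcond with ⟨n, hn, hun⟩ | h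
    · apply hbu
      have e2 : b * (b ^ (j * n - 1) * ((u ^ n) ^ k * q ^ n)) = 1 := by
        have e3 : b * b ^ (j * n - 1) = (b ^ j) ^ n := by
          have : 1 ≤ j * n := Nat.mul_pos hj hn
          rw [← pow_succ', Nat.sub_add_cancel this, pow_mul]
        rw [← mul_assoc, e3, pow_right_comm u, ← mul_pow, ← mul_pow, mul_comm (b ^ j), mul_assoc, e,
          one_pow]
      rw [inv_eq_of_mul_eq_one_right e2]
      exact S.mul_mem (S.pow_mem hbS _) (S.mul_mem (S.pow_mem hun _) (S.pow_mem hq _))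
    · exact h k hk _ (S.mul_mem hq (S.pow_mem hbS _)) e
  have hmem : ∀ x ∈ S ⊔ Submonoid.powers (b ^ 2 * u), ∃ s ∈ S, ∃ n : ℕ,
      x = s * (b ^ 2 * u) ^ n := by
    intro x hx
    obtain ⟨s, hs, t, ⟨n, rfl⟩, rfl⟩ := Submonoid.mem_sup.1 hx
    exact ⟨s, hs, n, rfl⟩
  have hle : S ≤ S ⊔ Submonoid.powers (b ^ 2 * u) := le_sup_left
  have hunit : ∀ x ∈ S ⊔ Submonoid.powers (b ^ 2 * u),
      x⁻¹ ∈ S ⊔ Submonoid.powers (b ^ 2 * u) → x ∈ S ∧ x⁻¹ ∈ S := by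
    intro x hx hx'
    obtain ⟨s, hs, n, e⟩ := hmem x hx
    obtain ⟨s', hs', m, e'⟩ := hmem _ hx'
    have h0 : n + m = 0 := by
      by_contra h0
      apply key (n + m) (2 * (n + m)) (by omega) (by omega) (s * s') (S.mul_mem hs hs')
      rw [← mul_inv_cancel x, e', e]
      rw [pow_mul, mul_left_comm, ← mul_pow, mul_comm u, pow_add]
      exact mul_mul_mul_comm _ _ _ _
    obtain ⟨rfl, rfl⟩ : n = 0 ∧ m = 0 := by omega
    rw [e']
    simp only [pow_zero, mul_one] at e ⊢
    exact ⟨e ▸ hs, hs'⟩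
  refine ⟨hNS.trans hle, ?_, ?_⟩
  · intro v hv hv' x hx y hy e
    obtain ⟨h1, h2⟩ := hunit v hv hv'
    exact hur v h1 h2 x hx y hy e
  · rintro a haN haS ⟨z, hz, haz⟩
    have hI := (irr_sub_iff S a (hNS haN)).1 (hirr a haN (hNS haN) ⟨z, hz, haz⟩)
    have hdvd : (⟨a, haN⟩ : N) ∣ ⟨b, hb⟩ := by
      rw [← Associates.mk_le_mk_iff_dvd, ← (hΩ hz).1.2]
      exact Multiset.dvd_prod haz
    obtain ⟨⟨c, hc⟩, hbc⟩ := hdvd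
    have hbc : b = a * c := congrArg Subtype.val hbc
    rw [irr_sub_iff]
    refine ⟨fun h => hI.1 (hunit a haS h).2, ?_⟩
    intro x hx y hy e
    obtain ⟨s, hs, n, rfl⟩ := hmem x hx
    obtain ⟨s', hs', m, rfl⟩ := hmem y hy
    have h0 : n + m = 0 := by
      by_contra h0
      apply key (n + m) (2 * (n + m) - 1) (by omega) (by omega) (s * s' * c)
        (S.mul_mem (S.mul_mem hs hs') (hNS hc))
      apply mul_left_cancel (a := b)
      have e3 : b * b ^ (2 * (n + m) - 1) = (b ^ 2) ^ (n + m) := by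
        rw [← pow_succ', Nat.sub_add_cancel (by omega), pow_mul]
      calc _ = u ^ (n + m) * (s * s' * c * (b * b ^ (2 * (n + m) - 1))) := by
            rw [mul_left_comm, mul_left_comm b]
        _ = (s * s') * ((b ^ 2 * u) ^ (n + m)) * c := by
            rw [e3, mul_pow]; ac_rfl
        _ = a * c := by rw [e, pow_add, mul_mul_mul_comm]
        _ = b * 1 := by rw [mul_one, hbc]
    obtain ⟨rfl, rfl⟩ : n = 0 ∧ m = 0 := by omega
    simp only [pow_zero, mul_one] at e ⊢
    exact (hI.2 s hs s' hs' e).imp (fun h => hle h) (fun h => hle h)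
end
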